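/- Let k > 0 and 0 < c < 1 be real. For x ∈ ℕ define the sequence v⁽ˣ⁾ by v⁽ˣ⁾_n = M̂_n(x; 2k, c)·√(w(x; 2k, c)) for n ∈ ℕ. Then: (i) each v⁽ˣ⁾ lies in ℓ²(ℕ; ℝ) and the family (v⁽ˣ⁾)_{x∈ℕ} is an orthonormal basis of ℓ²(ℕ; ℝ); (ii) for every n ∈ ℕ (with the convention v⁽ˣ⁾_{−1} := 0), √(n(2k+n−1)) v⁽ˣ⁾_{n−1} − ((1+c)(k+n)/√c) v⁽ˣ⁾_n + √((n+1)(2k+n)) v⁽ˣ⁾_{n+1} = ((c−1)(x+k)/√c) v⁽ˣ⁾_n. In representation-theoretic terms, v⁽ˣ⁾ is a unit eigenvector of π_k^+(X_c) with eigenvalue (c−1)(x+k)/√c (and of π_k^−(X_c) with eigenvalue −(c−1)(x+k)/√c), where X_c = −((1+c)/(2√c))H + B − C acts in the positive (respectively negative) discrete series representation of su(1,1). -/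

import Mathlib

open Finset

/-- Pochhammer symbol `(q)_m = q(q+1)⋯(q+m−1)` for a real `q`. -/
noncomputable def poch (q : ℝ) (m : ℕ) : ℝ := ∏ l ∈ Finset.range m, (q + l)

/-- The Meixner polynomial
`M_n(x; β, c) = ∑_{j=0}^n ((−n)_j (−x)_j/((β)_j j!)) (1 − 1/c)^j = ₂F₁(−n,−x;β;1−1/c)`. -/
noncomputable def meixner (n x : ℕ) (β c : ℝ) : ℝ :=
  ∑ j ∈ Finset.range (n + 1),
    poch (-(n : ℝ)) j * poch (-(x : ℝ)) j / (poch β j * (j.factorial : ℝ)) * (1 - 1 / c) ^ j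

/-- The orthonormal Meixner polynomial `M̂_n(x; β, c) = √((β)_n c^n/n!) M_n(x; β, c)`. -/
noncomputable def meixnerHat (n x : ℕ) (β c : ℝ) : ℝ :=
  Real.sqrt (poch β n * c ^ n / (n.factorial : ℝ)) * meixner n x β c

/-- The Meixner weight `w(x; β, c) = ((β)_x/x!) c^x (1−c)^β`. -/
noncomputable def meixnerWeight (x : ℕ) (β c : ℝ) : ℝ :=
  poch β x / (x.factorial : ℝ) * c ^ x * (1 - c) ^ β

/-!
The operator `p ↦ c (X + β) (p(X + 1) - p(X)) + X (p(X - 1) - p(X))` is bidiagonal on the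
polynomials `(-X)_j`, which makes `M_n` an eigenvector with eigenvalue `(c - 1) n`, and summation
by parts makes it symmetric for the negative binomial weight; hence the `M_n` are orthogonal.
Since `M_n(x)` is symmetric in `n` and `x`, the same difference equation read in `n` is the
three-term recurrence, which gives both the norms and the eigenvalue equation for `v⁽ˣ⁾`.
By the same duality the matrix `v⁽ˣ⁾_n` is symmetric, and an isometry of `ℓ²` with symmetric matrix
is surjective, so the orthonormal family is complete.
-/

open Polynomial

lemma poch_eq_eval_ascPochhammer (q : ℝ) (m : ℕ) : poch q m = (ascPochhammer ℝ m).eval q := by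
  induction m with
  | zero => simp [poch]
  | succ m ih => rw [ascPochhammer_succ_eval, ← ih, poch, poch, prod_range_succ]

lemma poch_succ (q : ℝ) (m : ℕ) : poch q (m + 1) = poch q m * (q + m) :=
  prod_range_succ _ m

lemma poch_succ_left (q : ℝ) (m : ℕ) : poch q (m + 1) = q * poch (q + 1) m := by
  simp [poch_eq_eval_ascPochhammer, ascPochhammer_succ_left, eval_comp]

lemma poch_pos {q : ℝ} (hq : 0 < q) (m : ℕ) : 0 < poch q m :=
  prod_pos fun l _ => by positivity

lemma poch_ne_zero {q : ℝ} (hq : ∀ l : ℕ, q + l ≠ 0) (m : ℕ) : poch q m ≠ 0 :=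
  prod_ne_zero_iff.2 fun l _ => hq l

lemma poch_neg_natCast_of_lt {n m : ℕ} (h : n < m) : poch (-(n : ℝ)) m = 0 :=
  prod_eq_zero (mem_range.2 h) (neg_add_cancel _)

section NegBinomialWeight

/-- The weight `(β)_n cⁿ / n!` on `ℕ`. Up to the factor `(1 - c)^β` it is the negative binomial
distribution `meixnerWeight`; it is also the squared normalization of `meixnerHat`. -/
noncomputable def negBinomialWeight (β c : ℝ) (n : ℕ) : ℝ :=
  poch β n * c ^ n / (n.factorial : ℝ)

lemma negBinomialWeight_pos {β c : ℝ} (hβ : 0 < β) (hc : 0 < c) (n : ℕ) :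
    0 < negBinomialWeight β c n := by
  have := poch_pos hβ n
  unfold negBinomialWeight
  positivity

lemma negBinomialWeight_succ (β c : ℝ) (n : ℕ) :
    (n + 1) * negBinomialWeight β c (n + 1) = c * (n + β) * negBinomialWeight β c n := by
  simp only [negBinomialWeight, poch_succ, Nat.factorial_succ, pow_succ]
  push_cast
  field_simp
  ring

lemma add_mul_negBinomialWeight (β c : ℝ) (n : ℕ) :
    (β + n) * negBinomialWeight β c n = β * negBinomialWeight (β + 1) c n := by
  have h := (poch_succ β n).symm.trans (poch_succ_left β n)
  simp only [negBinomialWeight]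
  linear_combination c ^ n / (n.factorial : ℝ) * h

lemma meixnerWeight_eq (x : ℕ) (β c : ℝ) :
    meixnerWeight x β c = negBinomialWeight β c x * (1 - c) ^ β := by
  simp only [meixnerWeight, negBinomialWeight]
  ring

lemma negBinomialWeight_eq_choose (β c : ℝ) (n : ℕ) :
    negBinomialWeight β c n = Ring.choose (β + n - 1) n * c ^ n := by
  have h := Ring.factorial_nsmul_multichoose_eq_ascPochhammer β n
  rw [Ring.multichoose_eq, nsmul_eq_mul, ascPochhammer_smeval_eq_eval,
    ← poch_eq_eval_ascPochhammer] at h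
  rw [negBinomialWeight, ← h]
  field_simp

variable {c : ℝ} (hc : |c| < 1)
include hc

lemma hasSum_negBinomialWeight (β : ℝ) : HasSum (negBinomialWeight β c) ((1 - c) ^ (-β)) := by
  have hball : c ∈ Metric.eball (0 : ℝ) 1 := by
    simpa [← ENNReal.ofReal_one, Metric.eball_ofReal] using hc
  have h := (Real.one_div_one_sub_rpow_hasFPowerSeriesOnBall_zero β).hasSum hball
  have h1c : 0 ≤ 1 - c := by linarith [(abs_lt.1 hc).2]
  simpa [FormalMultilinearSeries.ofScalars, funext (negBinomialWeight_eq_choose β c),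
    Real.rpow_neg h1c] using h

lemma summable_negBinomialWeight_mul_pow (β : ℝ) (m : ℕ) :
    Summable fun n : ℕ => negBinomialWeight β c n * (n : ℝ) ^ m := by
  induction m generalizing β with
  | zero => simpa using (hasSum_negBinomialWeight hc β).summable
  | succ m ih =>
    refine (((ih (β + 1)).sub (ih β)).mul_left β).congr fun n => ?_
    linear_combination -(n : ℝ) ^ m * add_mul_negBinomialWeight β c n

lemma summable_negBinomialWeight_mul_eval (β : ℝ) (p : ℝ[X]) :
    Summable fun n : ℕ => negBinomialWeight β c n * p.eval (n : ℝ) := by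
  induction p using Polynomial.induction_on' with
  | add p q hp hq => simpa only [eval_add, mul_add] using hp.add hq
  | monomial m r =>
    simpa only [eval_monomial, mul_left_comm] using
      (summable_negBinomialWeight_mul_pow hc β m).mul_left r

end NegBinomialWeight

section Functional

variable (β : ℝ) {c : ℝ} (hc : |c| < 1)

/-- The moment functional `p ↦ ∑ₙ (β)_n cⁿ / n! · p(n)` with respect to which the Meixner
polynomials are orthogonal. -/
noncomputable def negBinomialFunctional : ℝ[X] →ₗ[ℝ] ℝ where
  toFun p := ∑' n : ℕ, negBinomialWeight β c n * p.eval (n : ℝ)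
  map_add' p q := by
    simp only [eval_add, mul_add]
    exact (summable_negBinomialWeight_mul_eval hc β p).tsum_add
      (summable_negBinomialWeight_mul_eval hc β q)
  map_smul' r p := by
    simp only [eval_smul, smul_eq_mul, mul_left_comm _ r, tsum_mul_left, RingHom.id_apply]

lemma hasSum_negBinomialFunctional (p : ℝ[X]) :
    HasSum (fun n : ℕ => negBinomialWeight β c n * p.eval (n : ℝ))
      (negBinomialFunctional β hc p) :=
  (summable_negBinomialWeight_mul_eval hc β p).hasSum

lemma negBinomialFunctional_one : negBinomialFunctional β hc 1 = (1 - c) ^ (-β) := by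
  refine (hasSum_negBinomialFunctional β hc 1).unique ?_
  simpa using hasSum_negBinomialWeight hc β

lemma negBinomialFunctional_X_mul_taylor (p : ℝ[X]) :
    negBinomialFunctional β hc (X * taylor (-1) p) =
      negBinomialFunctional β hc (C c * (X + C β) * p) := by
  have h := (hasSum_nat_add_iff' 1).2 (hasSum_negBinomialFunctional β hc (X * taylor (-1) p))
  simp only [range_one, sum_singleton, eval_mul, eval_X, CharP.cast_eq_zero, zero_mul, mul_zero,
    sub_zero] at h
  refine h.unique ((hasSum_negBinomialFunctional β hc _).congr_fun fun n => ?_)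
  simp only [taylor_eval, eval_mul, eval_add, eval_C, eval_X, Nat.cast_add, Nat.cast_one,
    add_neg_cancel_right]
  linear_combination p.eval (n : ℝ) * negBinomialWeight_succ β c n

end Functional

/-- The Meixner difference operator
`p ↦ c (X + β) (p(X + 1) - p(X)) + X (p(X - 1) - p(X))`. -/
noncomputable def meixnerOp (β c : ℝ) : ℝ[X] →ₗ[ℝ] ℝ[X] :=
  LinearMap.mulLeft ℝ (C c * (X + C β)) ∘ₗ (taylor 1 - LinearMap.id) +
    LinearMap.mulLeft ℝ X ∘ₗ (taylor (-1) - LinearMap.id)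

lemma meixnerOp_apply (β c : ℝ) (p : ℝ[X]) :
    meixnerOp β c p = C c * (X + C β) * (taylor 1 p - p) + X * (taylor (-1) p - p) :=
  rfl

lemma negBinomialFunctional_meixnerOp_mul (β : ℝ) {c : ℝ} (hc : |c| < 1) (p q : ℝ[X]) :
    negBinomialFunctional β hc (meixnerOp β c p * q) =
      negBinomialFunctional β hc (p * meixnerOp β c q) := by
  have hpq := negBinomialFunctional_X_mul_taylor β hc (taylor 1 p * q)
  have hqp := negBinomialFunctional_X_mul_taylor β hc (p * taylor 1 q)
  simp only [taylor_mul, taylor_taylor, neg_add_cancel, taylor_zero] at hpq hqp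
  rw [← sub_eq_zero, ← map_sub] at hpq hqp ⊢
  rw [← sub_eq_zero.2 (hqp.trans hpq.symm), ← map_sub]
  congr 1
  simp only [meixnerOp_apply]
  ring

/-- The Pochhammer symbol `(-X)_j` as a polynomial. -/
noncomputable def negPochhammer (j : ℕ) : ℝ[X] := (ascPochhammer ℝ j).comp (-X)

lemma eval_negPochhammer (j : ℕ) (s : ℝ) : (negPochhammer j).eval s = poch (-s) j := by
  simp [negPochhammer, eval_comp, poch_eq_eval_ascPochhammer]

lemma meixnerOp_negPochhammer_zero (β c : ℝ) : meixnerOp β c (negPochhammer 0) = 0 := by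
  simp [meixnerOp_apply, negPochhammer]

lemma meixnerOp_negPochhammer_succ (β c : ℝ) (j : ℕ) :
    meixnerOp β c (negPochhammer (j + 1)) =
      ((c - 1) * (j + 1)) • negPochhammer (j + 1) -
        (c * (j + 1) * (β + j)) • negPochhammer j := by
  refine Polynomial.funext fun s => ?_
  have hfwd : poch (-(s + 1)) (j + 1) = -(s + 1) * poch (-s) j := by
    rw [poch_succ_left]; ring_nf
  have hbwd : s * poch (-(s + -1)) (j + 1) = s * (poch (-s + 1) j * (-s + 1 + j)) := by
    rw [poch_succ]; ring_nf
  have hshift := (poch_succ (-s) j).symm.trans (poch_succ_left (-s) j)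
  simp only [meixnerOp_apply, eval_add, eval_sub, eval_mul, eval_smul, smul_eq_mul, eval_C, eval_X,
    taylor_eval, eval_negPochhammer]
  rw [mul_sub s, hbwd, hfwd, poch_succ (-s)]
  linear_combination (-s + 1 + j) * hshift

section Meixner

lemma meixner_eq_sum_range {n N : ℕ} (x : ℕ) (β c : ℝ) (h : n < N) :
    meixner n x β c = ∑ j ∈ range N,
      poch (-(n : ℝ)) j * poch (-(x : ℝ)) j / (poch β j * (j.factorial : ℝ)) * (1 - 1 / c) ^ j := by
  refine sum_subset (range_mono h) fun j _ hj => ?_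
  rw [poch_neg_natCast_of_lt (by simpa using hj)]
  simp

lemma meixner_comm (n x : ℕ) (β c : ℝ) : meixner n x β c = meixner x n β c := by
  rw [meixner_eq_sum_range x β c (show n < n + x + 1 by lia),
    meixner_eq_sum_range n β c (show x < n + x + 1 by lia)]
  exact sum_congr rfl fun j _ => by rw [mul_comm (poch _ j)]

/-- The coefficient of `(-X)_j` in the Meixner polynomial `M_n(X; β, c)`. -/
noncomputable def meixnerCoeff (n : ℕ) (β c : ℝ) (j : ℕ) : ℝ :=
  poch (-(n : ℝ)) j / (poch β j * (j.factorial : ℝ)) * (1 - 1 / c) ^ j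

/-- The Meixner polynomial `M_n(X; β, c)` as an element of `ℝ[X]`, whose values on `ℕ` are given
by `meixner`. -/
noncomputable def meixnerPoly (n : ℕ) (β c : ℝ) : ℝ[X] :=
  ∑ j ∈ range (n + 1), meixnerCoeff n β c j • negPochhammer j

lemma eval_natCast_meixnerPoly (n x : ℕ) (β c : ℝ) :
    (meixnerPoly n β c).eval (x : ℝ) = meixner n x β c := by
  simp only [meixnerPoly, meixner, meixnerCoeff, eval_finsetSum, eval_smul, smul_eq_mul,
    eval_negPochhammer]
  exact sum_congr rfl fun j _ => by ring

lemma meixnerPoly_zero (β c : ℝ) : meixnerPoly 0 β c = 1 := by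
  simp [meixnerPoly, meixnerCoeff, negPochhammer, poch]

variable {β c : ℝ} (hβ : ∀ l : ℕ, β + l ≠ 0) (hc₀ : c ≠ 0)
include hβ hc₀

lemma meixnerCoeff_succ (n j : ℕ) :
    c * (j + 1) * (β + j) * meixnerCoeff n β c (j + 1) =
      (c - 1) * (j - n) * meixnerCoeff n β c j := by
  have := poch_ne_zero hβ j
  have := hβ j
  simp only [meixnerCoeff, poch_succ, Nat.factorial_succ, pow_succ]
  push_cast
  field_simp
  ring

lemma meixnerOp_meixnerPoly (n : ℕ) :
    meixnerOp β c (meixnerPoly n β c) = ((c - 1) * n) • meixnerPoly n β c := by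
  -- The operator is bidiagonal on `(-X)_j`, so truncating the series leaves one boundary term.
  have htrunc (N : ℕ) :
      meixnerOp β c (∑ j ∈ range (N + 1), meixnerCoeff n β c j • negPochhammer j) =
        ((c - 1) * n) • ∑ j ∈ range (N + 1), meixnerCoeff n β c j • negPochhammer j +
          ((c - 1) * (N - n) * meixnerCoeff n β c N) • negPochhammer N := by
    induction N with
    | zero =>
      simp only [zero_add, range_one, sum_singleton, map_smul, meixnerOp_negPochhammer_zero]
      push_cast
      module
    | succ N ih =>
      rw [sum_range_succ, map_add, ih, map_smul, meixnerOp_negPochhammer_succ,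
        ← meixnerCoeff_succ hβ hc₀]
      push_cast
      module
  simpa [meixnerPoly] using htrunc n

/-- At `n = 0` the truncated index `n - 1` is harmless because of the factor `n`. -/
lemma meixner_three_term (n x : ℕ) :
    c * (n + β) * meixner (n + 1) x β c =
      ((c - 1) * x + n + c * (n + β)) * meixner n x β c - n * meixner (n - 1) x β c := by
  have h := congrArg (eval (n : ℝ)) (meixnerOp_meixnerPoly hβ hc₀ x)
  have hpred : (n : ℝ) * (meixnerPoly x β c).eval ((n : ℝ) + -1) =
      n * meixner (n - 1) x β c := by
    rcases n with _ | n
    · simp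
    · simp [meixner_comm, ← eval_natCast_meixnerPoly]
  have hsucc : (meixnerPoly x β c).eval ((n : ℝ) + 1) = meixner (n + 1) x β c := by
    rw [meixner_comm, ← eval_natCast_meixnerPoly, Nat.cast_succ]
  simp only [meixnerOp_apply, eval_add, eval_sub, eval_mul, eval_smul, smul_eq_mul, eval_C, eval_X,
    taylor_eval, hsucc, eval_natCast_meixnerPoly, meixner_comm x n, mul_sub (n : ℝ), hpred] at h
  linear_combination h

lemma meixnerPoly_three_term (n : ℕ) :
    (c * (n + β)) • meixnerPoly (n + 1) β c =
      (c - 1) • (X * meixnerPoly n β c) + (n + c * (n + β)) • meixnerPoly n β c -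
        (n : ℝ) • meixnerPoly (n - 1) β c := by
  refine eq_of_infinite_eval_eq _ _
    ((Set.infinite_range_of_injective Nat.cast_injective).mono ?_)
  rintro _ ⟨x, rfl⟩
  have h := meixner_three_term hβ hc₀ n x
  simp only [Set.mem_ofPred_eq, eval_add, eval_sub, eval_mul, eval_smul, smul_eq_mul, eval_X,
    eval_natCast_meixnerPoly]
  linear_combination h

variable (hc : |c| < 1)
include hc

lemma negBinomialFunctional_meixnerPoly_mul_of_ne {m n : ℕ} (hmn : m ≠ n) :
    negBinomialFunctional β hc (meixnerPoly m β c * meixnerPoly n β c) = 0 := by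
  have h := negBinomialFunctional_meixnerOp_mul β hc (meixnerPoly m β c) (meixnerPoly n β c)
  simp only [meixnerOp_meixnerPoly hβ hc₀, smul_mul_assoc, mul_smul_comm, map_smul,
    smul_eq_mul] at h
  have hne : (c - 1) * ((m : ℝ) - n) ≠ 0 :=
    mul_ne_zero (by linarith [(abs_lt.1 hc).2]) (sub_ne_zero.2 (Nat.cast_injective.ne hmn))
  exact (mul_eq_zero.1 (by linear_combination h)).resolve_left hne

lemma negBinomialFunctional_meixnerPoly_mul_self_succ (n : ℕ) :
    c * (n + β) *
        negBinomialFunctional β hc (meixnerPoly (n + 1) β c * meixnerPoly (n + 1) β c) =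
      (n + 1) * negBinomialFunctional β hc (meixnerPoly n β c * meixnerPoly n β c) := by
  have horth {m l : ℕ} (h : m ≠ l) :=
    negBinomialFunctional_meixnerPoly_mul_of_ne hβ hc₀ hc h
  have hn : c * (n + β) *
        negBinomialFunctional β hc (meixnerPoly (n + 1) β c * meixnerPoly (n + 1) β c) =
      (c - 1) *
        negBinomialFunctional β hc (X * (meixnerPoly n β c * meixnerPoly (n + 1) β c)) := by
    have h := congrArg (fun p => negBinomialFunctional β hc (p * meixnerPoly (n + 1) β c))
      (meixnerPoly_three_term hβ hc₀ n)
    simpa only [add_mul _ _ (meixnerPoly (n + 1) β c), sub_mul _ _ (meixnerPoly (n + 1) β c),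
      smul_mul_assoc, map_add, map_sub, map_smul, smul_eq_mul, mul_assoc X,
      horth (show n ≠ n + 1 by lia), horth (show n - 1 ≠ n + 1 by lia), mul_zero, add_zero,
      sub_zero] using h
  have hsucc : (c - 1) *
        negBinomialFunctional β hc (X * (meixnerPoly n β c * meixnerPoly (n + 1) β c)) =
      (n + 1) * negBinomialFunctional β hc (meixnerPoly n β c * meixnerPoly n β c) := by
    have h := congrArg (fun p => negBinomialFunctional β hc (meixnerPoly n β c * p))
      (meixnerPoly_three_term hβ hc₀ (n + 1))
    simp only [mul_add (meixnerPoly n β c), mul_sub (meixnerPoly n β c), mul_smul_comm, map_add,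
      map_sub, map_smul, smul_eq_mul, add_tsub_cancel_right, mul_left_comm _ X,
      horth (show n ≠ n + 1 by lia), horth (show n ≠ n + 1 + 1 by lia), mul_zero, add_zero] at h
    rw [Nat.cast_succ] at h
    exact sub_eq_zero.1 h.symm
  exact hn.trans hsucc

lemma negBinomialWeight_mul_functional_meixnerPoly_mul_self (n : ℕ) :
    negBinomialWeight β c n *
      negBinomialFunctional β hc (meixnerPoly n β c * meixnerPoly n β c) = (1 - c) ^ (-β) := by
  induction n with
  | zero => simp [meixnerPoly_zero, negBinomialFunctional_one, negBinomialWeight, poch]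
  | succ n ih =>
    rw [← ih]
    refine mul_left_cancel₀ (n.cast_add_one_ne_zero (R := ℝ)) ?_
    rw [← mul_assoc, negBinomialWeight_succ]
    linear_combination negBinomialWeight β c n *
      negBinomialFunctional_meixnerPoly_mul_self_succ hβ hc₀ hc n

end Meixner

section Completeness

open scoped InnerProductSpace

-- The isometry `e_i ↦ V i` is self-adjoint, so it sends `f` to the family of `⟪V i, f⟫`.
lemma topologicalClosure_span_eq_top_of_orthonormal_of_conj_symm {ι 𝕜 : Type*} [RCLike 𝕜]
    {V : ι → lp (fun _ : ι => 𝕜) 2} (hV : Orthonormal 𝕜 V)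
    (hsymm : ∀ i j, V i j = starRingEnd 𝕜 (V j i)) :
    (Submodule.span 𝕜 (Set.range V)).topologicalClosure = ⊤ := by
  classical
  rw [Submodule.topologicalClosure_eq_top_iff, Submodule.eq_bot_iff]
  intro f hf
  set T := hV.orthogonalFamily.linearIsometry
  have hT (n : ι) : T f n = ⟪V n, f⟫_𝕜 := by
    have h := (hV.orthogonalFamily.hasSum_linearIsometry f).mapL
      (innerSL 𝕜 (lp.single 2 n (1 : 𝕜)))
    simp only [LinearIsometry.toSpanSingleton_apply, innerSL_apply_apply, inner_smul_right,
      lp.inner_single_left] at h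
    refine HasSum.unique (by simpa using h) ((lp.hasSum_inner (V n) f).congr_fun fun i => ?_)
    simp [hsymm i n]
  have hTf : T f = 0 := by
    ext n
    rw [hT, (Submodule.mem_orthogonal _ f).1 hf _ (Submodule.subset_span ⟨n, rfl⟩)]
    rfl
  exact (map_eq_zero_iff T T.injective).1 hTf

end Completeness

section EigenVector

/-- The sequence `v⁽ˣ⁾_n = M̂_n(x; β, c) √w(x; β, c)`. -/
noncomputable def meixnerVec (β c : ℝ) (x n : ℕ) : ℝ :=
  meixnerHat n x β c * √(meixnerWeight x β c)

variable {β c : ℝ}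

lemma meixnerVec_eq (x n : ℕ) :
    meixnerVec β c x n =
      √(negBinomialWeight β c n) * meixner n x β c * √(meixnerWeight x β c) :=
  rfl

lemma meixnerVec_comm (hc₁ : c ≤ 1) (x n : ℕ) : meixnerVec β c x n = meixnerVec β c n x := by
  have h : 0 ≤ (1 - c) ^ β := Real.rpow_nonneg (sub_nonneg.2 hc₁) β
  simp only [meixnerVec_eq, meixnerWeight_eq, Real.sqrt_mul' _ h, meixner_comm x n]
  ring

section Recurrence

variable (hβ : 0 < β) (hc₀ : 0 < c)
include hβ hc₀

lemma sqrt_mul_sqrt_negBinomialWeight_succ (n : ℕ) :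
    √((n + 1) * (β + n)) * √(negBinomialWeight β c (n + 1)) =
      √c * (β + n) * √(negBinomialWeight β c n) := by
  have h : (n + 1) * (β + n) * negBinomialWeight β c (n + 1) =
      (β + n) ^ 2 * (c * negBinomialWeight β c n) := by
    linear_combination (β + n) * negBinomialWeight_succ β c n
  rw [← Real.sqrt_mul (by positivity), h, Real.sqrt_mul (by positivity),
    Real.sqrt_sq (by positivity), Real.sqrt_mul hc₀.le]
  ring

lemma sqrt_mul_sqrt_negBinomialWeight (n : ℕ) :
    √((n + 1) * (β + n)) * √(negBinomialWeight β c n) =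
      (n + 1) / √c * √(negBinomialWeight β c (n + 1)) := by
  have h : (n + 1) * (β + n) * negBinomialWeight β c n * c =
      (n + 1) ^ 2 * negBinomialWeight β c (n + 1) := by
    linear_combination -(n + 1 : ℝ) * negBinomialWeight_succ β c n
  rw [div_mul_eq_mul_div, eq_div_iff (by positivity), ← Real.sqrt_mul (by positivity),
    ← Real.sqrt_mul' _ hc₀.le, h, Real.sqrt_mul (by positivity), Real.sqrt_sq (by positivity)]

lemma sqrt_mul_meixnerVec_pred (x n : ℕ) :
    √(n * (β + n - 1)) * (if n = 0 then 0 else meixnerVec β c x (n - 1)) =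
      n / √c * (√(negBinomialWeight β c n) * meixner (n - 1) x β c * √(meixnerWeight x β c)) := by
  rcases n with _ | n
  · simp
  · have h := sqrt_mul_sqrt_negBinomialWeight hβ hc₀ n
    have hβn : β + ((n : ℝ) + 1) - 1 = β + n := by ring
    simp only [n.succ_ne_zero, if_false, add_tsub_cancel_right, meixnerVec_eq, Nat.cast_succ, hβn]
    linear_combination meixner n x β c * √(meixnerWeight x β c) * h

lemma sqrt_mul_meixnerVec_succ (x n : ℕ) :
    √((n + 1) * (β + n)) * meixnerVec β c x (n + 1) =
      √c * (β + n) *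
        (√(negBinomialWeight β c n) * meixner (n + 1) x β c * √(meixnerWeight x β c)) := by
  rw [meixnerVec_eq]
  linear_combination meixner (n + 1) x β c * √(meixnerWeight x β c) *
    sqrt_mul_sqrt_negBinomialWeight_succ hβ hc₀ n

lemma meixnerVec_recurrence (x n : ℕ) :
    √(n * (β + n - 1)) * (if n = 0 then 0 else meixnerVec β c x (n - 1)) -
        (1 + c) * (β / 2 + n) / √c * meixnerVec β c x n +
        √((n + 1) * (β + n)) * meixnerVec β c x (n + 1) =
      (c - 1) * (x + β / 2) / √c * meixnerVec β c x n := by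
  have hβl (l : ℕ) : β + l ≠ 0 := by positivity
  have hrec := meixner_three_term hβl hc₀.ne' n x
  have hsq : √c ^ 2 = c := Real.sq_sqrt hc₀.le
  have hsqrt : √c ≠ 0 := by positivity
  rw [sqrt_mul_meixnerVec_pred hβ hc₀, sqrt_mul_meixnerVec_succ hβ hc₀, meixnerVec_eq]
  field_simp
  rw [hsq]
  linear_combination
    2 * √(negBinomialWeight β c n) * √(meixnerWeight x β c) * hrec

end Recurrence

variable (hβ : 0 < β) (hc₀ : 0 < c) (hc₁ : c < 1)
include hβ hc₀ hc₁

lemma hasSum_meixnerVec_mul_meixnerVec (x y : ℕ) :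
    HasSum (fun n => meixnerVec β c x n * meixnerVec β c y n) (if x = y then 1 else 0) := by
  have hβl (l : ℕ) : β + l ≠ 0 := by positivity
  have hc : |c| < 1 := by rwa [abs_of_pos hc₀]
  have hweight : ∀ n, 0 ≤ negBinomialWeight β c n := fun n => (negBinomialWeight_pos hβ hc₀ n).le
  have hrpow : 0 < (1 - c) ^ β := Real.rpow_pos_of_pos (sub_pos.2 hc₁) β
  have hsum := (hasSum_negBinomialFunctional β hc (meixnerPoly x β c * meixnerPoly y β c)).mul_left
    (√(meixnerWeight x β c) * √(meixnerWeight y β c))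
  convert! hsum using 1
  · funext n
    rw [meixnerVec_eq, meixnerVec_eq, eval_mul, eval_natCast_meixnerPoly, eval_natCast_meixnerPoly,
      meixner_comm x, meixner_comm y]
    nth_rw 3 [← Real.mul_self_sqrt (hweight n)]
    ring
  · split_ifs with hxy
    · subst hxy
      have hnorm := negBinomialWeight_mul_functional_meixnerPoly_mul_self hβl hc₀.ne' hc x
      rw [meixnerWeight_eq, Real.mul_self_sqrt (mul_nonneg (hweight x) hrpow.le), mul_right_comm,
        hnorm, Real.rpow_neg (sub_nonneg.2 hc₁.le), inv_mul_cancel₀ hrpow.ne']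
    · rw [negBinomialFunctional_meixnerPoly_mul_of_ne hβl hc₀.ne' hc hxy, mul_zero]

lemma memℓp_meixnerVec (x : ℕ) : Memℓp (meixnerVec β c x) 2 :=
  memℓp_gen <| by
    simpa [sq] using (hasSum_meixnerVec_mul_meixnerVec hβ hc₀ hc₁ x x).summable

lemma orthonormal_meixnerVec :
    Orthonormal ℝ fun x => (⟨meixnerVec β c x, memℓp_meixnerVec hβ hc₀ hc₁ x⟩ :
      lp (fun _ : ℕ => ℝ) 2) := by
  rw [orthonormal_iff_ite]
  intro x y
  refine (lp.hasSum_inner _ _).unique ?_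
  simpa [mul_comm] using hasSum_meixnerVec_mul_meixnerVec hβ hc₀ hc₁ x y

end EigenVector

/-- For `k > 0` and `0 < c < 1`, the vectors `v⁽ˣ⁾_n = M̂_n(x; 2k, c)√(w(x; 2k, c))`,
`x ∈ ℕ`, lie in `ℓ²(ℕ; ℝ)` and form an orthonormal basis there; moreover each `v⁽ˣ⁾`
satisfies the three-term recurrence
`√(n(2k+n−1)) v⁽ˣ⁾_{n−1} − ((1+c)(k+n)/√c) v⁽ˣ⁾_n + √((n+1)(2k+n)) v⁽ˣ⁾_{n+1}
  = ((c−1)(x+k)/√c) v⁽ˣ⁾_n`,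
i.e. `v⁽ˣ⁾` is a unit eigenvector of `π_k^±(X_c)` with eigenvalue `±(c−1)(x+k)/√c`. -/
theorem meixner_eigenvectors_discrete_series (k c : ℝ) (hk : 0 < k) (hc0 : 0 < c)
    (hc1 : c < 1) :
    ∃ V : ℕ → lp (fun _ : ℕ => ℝ) 2,
      (∀ x n : ℕ, (V x : ∀ _ : ℕ, ℝ) n =
        meixnerHat n x (2 * k) c * Real.sqrt (meixnerWeight x (2 * k) c)) ∧
      Orthonormal ℝ V ∧
      (Submodule.span ℝ (Set.range V)).topologicalClosure = ⊤ ∧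
      (∀ x n : ℕ,
        Real.sqrt ((n : ℝ) * (2 * k + n - 1)) *
            (if n = 0 then 0 else (V x : ∀ _ : ℕ, ℝ) (n - 1)) -
          (1 + c) * (k + n) / Real.sqrt c * (V x : ∀ _ : ℕ, ℝ) n +
          Real.sqrt (((n : ℝ) + 1) * (2 * k + n)) * (V x : ∀ _ : ℕ, ℝ) (n + 1) =
        (c - 1) * ((x : ℝ) + k) / Real.sqrt c * (V x : ∀ _ : ℕ, ℝ) n) := by
  have hβ : 0 < 2 * k := by positivity
  have horth := orthonormal_meixnerVec hβ hc0 hc1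
  refine ⟨_, fun _ _ => rfl, horth, ?_, fun x n => ?_⟩
  · exact topologicalClosure_span_eq_top_of_orthonormal_of_conj_symm horth
      fun x n => meixnerVec_comm hc1.le x n
  · simpa using meixnerVec_recurrence hβ hc0 x n
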